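/- Let j ≥ 1, h ∈ C^{j}(ℝⁿ; ℝ^p), let Q ∈ ℝ^{p×p} be symmetric, and let c ∈ ℝ^p be a fixed vector. Then for every ξ ∈ ℝⁿ, D^j( x ↦ (c − h(x))ᵀ Q (c − h(x)) )(ξ) = −2 · D^j h(ξ) *_{1,1} (Q c) + Σ_{i=0}^{j} Sym_{i,j−i}( D^i h(ξ) *_{1,1} ( Q *_{2,1} D^{j−i} h(ξ) ) ), where Q c ∈ ℝ^p is regarded as an order-1 tensor. -/

import Mathlib

open scoped BigOperators
open Matrix

/-- The set `S_{i,j}` of `(i,j)`-shuffles, realized as the permutations of `Fin k`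
(with `k = i + j`) that are strictly increasing on the first `i` positions and on the
remaining positions. -/
def shuffles (k i : ℕ) : Finset (Equiv.Perm (Fin k)) :=
  Finset.univ.filter fun σ =>
    (∀ a b : Fin k, a < b → (b : ℕ) < i → σ a < σ b) ∧
    (∀ a b : Fin k, a < b → i ≤ (a : ℕ) → σ a < σ b)

/-- Entry of the order-`k` derivative tensor of `u : ℝⁿ → ℝ` at `ξ`. -/
noncomputable def Dt (n k : ℕ) (u : (Fin n → ℝ) → ℝ) (ξ : Fin n → ℝ)
    (idx : Fin k → Fin n) : ℝ :=
  iteratedFDeriv ℝ k u ξ fun r => Pi.single (idx r) 1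

/-- Inclusion of the first block `{0, …, i-1}` into `Fin k`. -/
def finL {k : ℕ} (i : ℕ) (h : i ≤ k) (r : Fin i) : Fin k := Fin.castLE h r

/-- Inclusion of the second block into `Fin k`, shifting by `i`. -/
def finR {k : ℕ} (i : ℕ) {l : ℕ} (h : i + l = k) (r : Fin l) : Fin k :=
  ⟨i + r.1, by have := r.2; omega⟩

/-!
By symmetry of `Q` the tracking term is `cᵀQc - 2 (Qc)ᵀh + hᵀQh`. Its first summand is killed by
`D^j`, its second is a fixed linear map applied to `h`, and its third is a bilinear map `B`
applied to `(h, h)`. Differentiating `B(f, g)` along `v₁, …, v_k`, each direction hits either `f` or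
`g`, so `D^k B(f, g) = ∑ B(D_s f, D_{sᶜ} g)` over the subsets `s` of `{1, …, k}`; a subset of size
`i` is the image of the first `i` positions under exactly one `(i, k - i)`-shuffle.
-/

section Shuffles

variable {i l k : ℕ}

/-- The decomposition of `Fin k`, `k = i + l`, into its first `i` and its last `l` positions. -/
def blockEquiv (hk : i + l = k) : Fin i ⊕ Fin l ≃ Fin k :=
  finSumFinEquiv.trans (finCongr hk)

theorem blockEquiv_inl (hk : i + l = k) (a : Fin i) :
    blockEquiv hk (.inl a) = finL i (Nat.le.intro hk) a :=
  rfl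

theorem blockEquiv_inr (hk : i + l = k) (a : Fin l) : blockEquiv hk (.inr a) = finR i hk a :=
  rfl

theorem finR_lt_finR {hk : i + l = k} {a b : Fin l} : finR i hk a < finR i hk b ↔ a < b := by
  simp [finR]

theorem mem_shuffles_iff (hk : i + l = k) {σ : Equiv.Perm (Fin k)} :
    σ ∈ shuffles k i ↔
      (StrictMono fun a => σ (finL i (Nat.le.intro hk) a)) ∧
        StrictMono fun a => σ (finR i hk a) := by
  simp only [shuffles, Finset.mem_filter, Finset.mem_univ, true_and]
  refine and_congr ⟨fun hσ a b hab => hσ _ _ hab b.2, fun hσ a b hab hb => ?_⟩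
    ⟨fun hσ a b hab => hσ _ _ (finR_lt_finR.2 hab) (Nat.le_add_right i a), fun hσ a b hab ha => ?_⟩
  · exact hσ (a := ⟨a, by lia⟩) (b := ⟨b, hb⟩) hab
  · obtain ⟨a | a, rfl⟩ := (blockEquiv hk).surjective a
    · exact absurd a.2 ha.not_gt
    obtain ⟨b | b, rfl⟩ := (blockEquiv hk).surjective b
    · exact absurd (b.2.trans_le ha) (Nat.lt_asymm hab)
    · exact hσ ((finR_lt_finR (hk := hk)).1 hab)

/-- The image under `σ` of the first `i` positions; it determines an `(i, k - i)`-shuffle `σ`. -/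
def shuffleHead (i : ℕ) (σ : Equiv.Perm (Fin k)) : Finset (Fin k) :=
  Finset.univ.filter fun b => (σ.symm b : ℕ) < i

theorem apply_mem_shuffleHead {σ : Equiv.Perm (Fin k)} {a : Fin k} :
    σ a ∈ shuffleHead i σ ↔ (a : ℕ) < i := by
  simp [shuffleHead]

theorem apply_finL_mem_shuffleHead (hi : i ≤ k) (σ : Equiv.Perm (Fin k)) (a : Fin i) :
    σ (finL i hi a) ∈ shuffleHead i σ :=
  apply_mem_shuffleHead.2 a.2

theorem apply_finR_mem_compl_shuffleHead (hk : i + l = k) (σ : Equiv.Perm (Fin k)) (a : Fin l) :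
    σ (finR i hk a) ∈ (shuffleHead i σ)ᶜ := by
  simp [apply_mem_shuffleHead, finR]

theorem card_shuffleHead (hi : i ≤ k) (σ : Equiv.Perm (Fin k)) : (shuffleHead i σ).card = i := by
  have map_eq : (Finset.univ.filter fun a : Fin k => (a : ℕ) < i).map σ.toEmbedding =
      shuffleHead i σ := by
    ext b
    simp [shuffleHead, Finset.mem_map_equiv]
  rw [← map_eq, Finset.card_map, Fin.card_filter_val_lt, min_eq_right hi]

theorem card_compl_eq_of_card_eq (hk : i + l = k) {s : Finset (Fin k)} (hs : s.card = i) :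
    sᶜ.card = l := by
  rw [Finset.card_compl, hs, Fintype.card_fin]
  lia

/-- The `(i, l)`-shuffle enumerating first `s` and then `sᶜ`, each in increasing order. -/
def shuffleOfFinset (hk : i + l = k) {s : Finset (Fin k)} (hs : s.card = i) :
    Equiv.Perm (Fin k) :=
  (blockEquiv hk).symm.trans (finSumEquivOfFinset hs (card_compl_eq_of_card_eq hk hs))

theorem shuffleOfFinset_finL (hk : i + l = k) {s : Finset (Fin k)} (hs : s.card = i) (a : Fin i) :
    shuffleOfFinset hk hs (finL i (Nat.le.intro hk) a) = s.orderEmbOfFin hs a := by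
  simp [shuffleOfFinset, ← blockEquiv_inl hk]

theorem shuffleOfFinset_finR (hk : i + l = k) {s : Finset (Fin k)} (hs : s.card = i) (a : Fin l) :
    shuffleOfFinset hk hs (finR i hk a) =
      sᶜ.orderEmbOfFin (card_compl_eq_of_card_eq hk hs) a := by
  simp [shuffleOfFinset, ← blockEquiv_inr hk]

theorem shuffleOfFinset_mem_shuffles (hk : i + l = k) {s : Finset (Fin k)} (hs : s.card = i) :
    shuffleOfFinset hk hs ∈ shuffles k i := by
  rw [mem_shuffles_iff hk]
  simp only [shuffleOfFinset_finL, shuffleOfFinset_finR]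
  exact ⟨OrderEmbedding.strictMono _, OrderEmbedding.strictMono _⟩

theorem shuffleHead_shuffleOfFinset (hk : i + l = k) {s : Finset (Fin k)} (hs : s.card = i) :
    shuffleHead i (shuffleOfFinset hk hs) = s := by
  have subset_head : s ⊆ shuffleHead i (shuffleOfFinset hk hs) := fun b hb => by
    obtain ⟨a, rfl⟩ : b ∈ Set.range (s.orderEmbOfFin hs) := by simpa using hb
    rw [← shuffleOfFinset_finL hk]
    exact apply_finL_mem_shuffleHead _ _ a
  exact (Finset.eq_of_subset_of_card_le subset_head
    (by rw [hs, card_shuffleHead (Nat.le.intro hk)])).symm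

theorem shuffleOfFinset_shuffleHead (hk : i + l = k) {σ : Equiv.Perm (Fin k)}
    (hσ : σ ∈ shuffles k i) :
    shuffleOfFinset hk (card_shuffleHead (Nat.le.intro hk) σ) = σ := by
  obtain ⟨mono_finL, mono_finR⟩ := (mem_shuffles_iff hk).1 hσ
  ext1 b
  obtain ⟨a | a, rfl⟩ := (blockEquiv hk).surjective b
  · rw [blockEquiv_inl, shuffleOfFinset_finL]
    exact (congrFun (Finset.orderEmbOfFin_unique _
      (apply_finL_mem_shuffleHead (Nat.le.intro hk) σ) mono_finL) a).symm
  · rw [blockEquiv_inr, shuffleOfFinset_finR]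
    exact (congrFun (Finset.orderEmbOfFin_unique _
      (apply_finR_mem_compl_shuffleHead hk σ) mono_finR) a).symm

theorem sum_shuffles_shuffleHead {M : Type*} [AddCommMonoid M] (hi : i ≤ k)
    (F : Finset (Fin k) → M) :
    ∑ σ ∈ shuffles k i, F (shuffleHead i σ) =
      ∑ s ∈ Finset.powersetCard i Finset.univ, F s :=
  have hk : i + (k - i) = k := Nat.add_sub_cancel' hi
  Finset.sum_bij' (fun σ _ => shuffleHead i σ)
    (fun _ hs => shuffleOfFinset hk (Finset.mem_powersetCard.1 hs).2)
    (fun σ _ => Finset.mem_powersetCard.2 ⟨Finset.subset_univ _, card_shuffleHead hi σ⟩)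
    (fun _ _ => shuffleOfFinset_mem_shuffles hk _)
    (fun _ hσ => shuffleOfFinset_shuffleHead hk hσ)
    (fun _ _ => shuffleHead_shuffleOfFinset hk _)
    (fun _ _ => rfl)

end Shuffles

section Leibniz

variable {𝕜 : Type*} [NontriviallyNormedField 𝕜]
  {E F G H : Type*} [NormedAddCommGroup E] [NormedSpace 𝕜 E]
  [NormedAddCommGroup F] [NormedSpace 𝕜 F] [NormedAddCommGroup G] [NormedSpace 𝕜 G]
  [NormedAddCommGroup H] [NormedSpace 𝕜 H]
  {ι : Type*} [LinearOrder ι] {f : E → F} {g : E → G} {v : ι → E} {x : E} {s t : Finset ι} {a : ι}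

variable (𝕜) in
/-- The iterated derivative `D_s f` of `f` in the directions `v a`, `a ∈ s`. The directions are
inserted in increasing order of `a`, so no symmetry of the derivative is required. -/
noncomputable def iteratedFDerivAlong (f : E → F) (v : ι → E) (s : Finset ι) (x : E) : F :=
  iteratedFDeriv 𝕜 s.card f x fun a => v (s.orderEmbOfFin rfl a)

theorem iteratedFDerivAlong_eq_of_strictMono {m : ℕ} (hs : s.card = m) {e : Fin m → ι}
    (he : StrictMono e) (hes : ∀ a, e a ∈ s) :
    iteratedFDerivAlong 𝕜 f v s x = iteratedFDeriv 𝕜 m f x fun a => v (e a) := by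
  subst hs
  rw [Finset.orderEmbOfFin_unique rfl hes he, iteratedFDerivAlong]

theorem iteratedFDerivAlong_empty : iteratedFDerivAlong 𝕜 f v ∅ x = f x :=
  iteratedFDeriv_zero_apply _

theorem iteratedFDerivAlong_univ {k : ℕ} {v : Fin k → E} :
    iteratedFDerivAlong 𝕜 f v Finset.univ x = iteratedFDeriv 𝕜 k f x v :=
  iteratedFDerivAlong_eq_of_strictMono (Finset.card_fin k) strictMono_id fun _ => Finset.mem_univ _

theorem differentiableAt_iteratedFDerivAlong {n : WithTop ℕ∞} (hf : ContDiffAt 𝕜 n f x)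
    (hs : s.card < n) :
    DifferentiableAt 𝕜 (iteratedFDerivAlong 𝕜 f v s) x :=
  ((hf.differentiableAt_iteratedFDeriv hs).hasFDerivAt.continuousMultilinear_apply_const
    _).differentiableAt

theorem fderiv_iteratedFDerivAlong_apply {n : WithTop ℕ∞} (hf : ContDiffAt 𝕜 n f x)
    (hs : s.card < n) (ha : ∀ b ∈ s, a < b) :
    fderiv 𝕜 (iteratedFDerivAlong 𝕜 f v s) x (v a) =
      iteratedFDerivAlong 𝕜 f v (insert a s) x := by
  have cons_strictMono : StrictMono (Fin.cons a (s.orderEmbOfFin rfl) : Fin (s.card + 1) → ι) :=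
    Fin.strictMono_cons.2 ⟨fun b => ha _ (s.orderEmbOfFin_mem rfl b), OrderEmbedding.strictMono _⟩
  have cons_mem : ∀ b, (Fin.cons a (s.orderEmbOfFin rfl) : Fin (s.card + 1) → ι) b ∈ insert a s :=
    Fin.cases (by simp) (by simp)
  have card_insert : (insert a s).card = s.card + 1 :=
    Finset.card_insert_of_notMem fun has => (ha a has).false
  rw [iteratedFDerivAlong_eq_of_strictMono card_insert cons_strictMono cons_mem,
    (hf.differentiableAt_iteratedFDeriv hs).iteratedFDeriv_succ_apply_left']
  rfl

theorem fderiv_bilinear_iteratedFDerivAlong_apply (B : F →L[𝕜] G →L[𝕜] H) {m n : WithTop ℕ∞}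
    (hf : ContDiffAt 𝕜 m f x) (hs : s.card < m) (has : ∀ b ∈ s, a < b)
    (hg : ContDiffAt 𝕜 n g x) (ht : t.card < n) (hat : ∀ b ∈ t, a < b) :
    fderiv 𝕜 (fun y => B (iteratedFDerivAlong 𝕜 f v s y) (iteratedFDerivAlong 𝕜 g v t y)) x (v a) =
      B (iteratedFDerivAlong 𝕜 f v s x) (iteratedFDerivAlong 𝕜 g v (insert a t) x) +
        B (iteratedFDerivAlong 𝕜 f v (insert a s) x) (iteratedFDerivAlong 𝕜 g v t x) := by
  rw [B.fderiv_of_bilinear (differentiableAt_iteratedFDerivAlong hf hs)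
      (differentiableAt_iteratedFDerivAlong hg ht),
    ← fderiv_iteratedFDerivAlong_apply hf hs has, ← fderiv_iteratedFDerivAlong_apply hg ht hat]
  rfl

theorem iteratedFDerivAlong_bilinear (B : F →L[𝕜] G →L[𝕜] H)
    (hf : ContDiffAt 𝕜 s.card f x) (hg : ContDiffAt 𝕜 s.card g x) :
    iteratedFDerivAlong 𝕜 (fun y => B (f y) (g y)) v s x =
      ∑ t ∈ s.powerset,
        B (iteratedFDerivAlong 𝕜 f v t x) (iteratedFDerivAlong 𝕜 g v (s \ t) x) := by
  induction s using Finset.induction_on_min generalizing x with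
  | empty => simp [iteratedFDerivAlong_empty]
  | insert a s ha ih =>
    have a_notMem : a ∉ s := fun has => (ha a has).false
    have card_lt {t : Finset ι} (ht : t ⊆ s) : (t.card : WithTop ℕ∞) < (insert a s).card := by
      rw [Finset.card_insert_of_notMem a_notMem]
      exact_mod_cast Nat.lt_succ_of_le (Finset.card_le_card ht)
    have leibniz_near :
        iteratedFDerivAlong 𝕜 (fun y => B (f y) (g y)) v s =ᶠ[nhds x] fun y =>
          ∑ t ∈ s.powerset,
            B (iteratedFDerivAlong 𝕜 f v t y) (iteratedFDerivAlong 𝕜 g v (s \ t) y) := by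
      filter_upwards [hf.eventually (by simp), hg.eventually (by simp)] with y hfy hgy
      exact ih (hfy.of_le (card_lt subset_rfl).le) (hgy.of_le (card_lt subset_rfl).le)
    have diff_summand : ∀ t ∈ s.powerset, DifferentiableAt 𝕜 (fun y =>
        B (iteratedFDerivAlong 𝕜 f v t y) (iteratedFDerivAlong 𝕜 g v (s \ t) y)) x := fun t ht =>
      (B.hasFDerivAt_of_bilinear
        (differentiableAt_iteratedFDerivAlong hf (card_lt (Finset.mem_powerset.1 ht))).hasFDerivAt
        (differentiableAt_iteratedFDerivAlong hg
          (card_lt Finset.sdiff_subset)).hasFDerivAt).differentiableAt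
    have hfg : ContDiffAt 𝕜 (insert a s).card (fun y => B (f y) (g y)) x :=
      B.isBoundedBilinearMap.contDiff.comp_contDiffAt x (hf.prodMk hg)
    rw [← fderiv_iteratedFDerivAlong_apply hfg (card_lt subset_rfl) ha, leibniz_near.fderiv_eq,
      fderiv_fun_sum diff_summand, _root_.sum_apply, Finset.sum_powerset_insert a_notMem,
      ← Finset.sum_add_distrib]
    refine Finset.sum_congr rfl fun t ht => ?_
    have t_subset := Finset.mem_powerset.1 ht
    have a_notMem_t := Finset.notMem_mono t_subset a_notMem
    rw [fderiv_bilinear_iteratedFDerivAlong_apply B hf (card_lt t_subset)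
        (fun b hb => ha b (t_subset hb)) hg (card_lt Finset.sdiff_subset)
        (fun b hb => ha b (Finset.sdiff_subset hb)),
      Finset.insert_sdiff_of_notMem s a_notMem_t, Finset.insert_sdiff_insert,
      Finset.sdiff_insert_of_notMem a_notMem]

theorem iteratedFDeriv_bilinear_eq_sum_shuffles (B : F →L[𝕜] G →L[𝕜] H) {k : ℕ}
    (hf : ContDiffAt 𝕜 k f x) (hg : ContDiffAt 𝕜 k g x) (v : Fin k → E) :
    iteratedFDeriv 𝕜 k (fun y => B (f y) (g y)) x v =
      ∑ i : Fin (k + 1), ∑ σ ∈ shuffles k i,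
        B (iteratedFDeriv 𝕜 i f x fun a => v (σ (finL i (by lia) a)))
          (iteratedFDeriv 𝕜 (k - i) g x fun a => v (σ (finR i (by lia) a))) := by
  rw [← iteratedFDerivAlong_univ, iteratedFDerivAlong_bilinear B (by simpa using hf)
    (by simpa using hg), Finset.sum_powerset, Finset.card_fin, Finset.sum_range]
  refine Finset.sum_congr rfl fun i _ => ?_
  have hi : (i : ℕ) ≤ k := Nat.le_of_lt_succ i.isLt
  have hk : (i : ℕ) + (k - i) = k := Nat.add_sub_cancel' hi
  rw [← sum_shuffles_shuffleHead hi]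
  refine Finset.sum_congr rfl fun σ hσ => ?_
  obtain ⟨mono_finL, mono_finR⟩ := (mem_shuffles_iff hk).1 hσ
  rw [← Finset.compl_eq_univ_sdiff,
    iteratedFDerivAlong_eq_of_strictMono (card_shuffleHead hi σ) mono_finL
      (apply_finL_mem_shuffleHead hi σ),
    iteratedFDerivAlong_eq_of_strictMono
      (card_compl_eq_of_card_eq hk (card_shuffleHead hi σ)) mono_finR
      (apply_finR_mem_compl_shuffleHead hk σ)]

theorem deriv_output_tracking_term_general {j : ℕ} (hj : j ≠ 0) {h : E → F}
    (hh : ContDiffAt 𝕜 j h x) (B : F →L[𝕜] F →L[𝕜] G) (hB : ∀ y z, B y z = B z y) (c : F)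
    (v : Fin j → E) :
    iteratedFDeriv 𝕜 j (fun y => B (c - h y) (c - h y)) x v =
      (-2 : 𝕜) • B (iteratedFDeriv 𝕜 j h x v) c +
        ∑ i : Fin (j + 1), ∑ σ ∈ shuffles j i,
          B (iteratedFDeriv 𝕜 i h x fun a => v (σ (finL i (by lia) a)))
            (iteratedFDeriv 𝕜 (j - i) h x fun a => v (σ (finR i (by lia) a))) := by
  let linearPart : F →L[𝕜] G := (-2 : 𝕜) • B.flip c
  have expand : (fun y => B (c - h y) (c - h y)) =
      fun y => B c c + (linearPart (h y) + B (h y) (h y)) := by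
    funext y
    simp only [linearPart, map_sub, _root_.sub_apply, _root_.smul_apply,
      ContinuousLinearMap.flip_apply, hB c (h y)]
    module
  have hlin : ContDiffAt 𝕜 j (fun y => linearPart (h y)) x :=
    linearPart.contDiff.comp_contDiffAt x hh
  have hquad : ContDiffAt 𝕜 j (fun y => B (h y) (h y)) x :=
    B.isBoundedBilinearMap.contDiff.comp_contDiffAt x (hh.prodMk hh)
  rw [expand, fun_iteratedFDeriv_add_apply contDiffAt_const (hlin.add hquad),
    fun_iteratedFDeriv_add_apply hlin hquad, iteratedFDeriv_const_of_ne hj, Pi.zero_apply, zero_add,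
    _root_.add_apply, iteratedFDeriv_bilinear_eq_sum_shuffles B hh hh]
  congr 1
  exact congrArg (· v) (linearPart.iteratedFDeriv_comp_left hh le_rfl)

end Leibniz

theorem Dt_component {n p j k : ℕ} {h : (Fin n → ℝ) → Fin p → ℝ} {ξ : Fin n → ℝ}
    (hh : ContDiffAt ℝ j h ξ) (hk : k ≤ j) (idx : Fin k → Fin n) (s : Fin p) :
    Dt n k (fun x => h x s) ξ idx =
      iteratedFDeriv ℝ k h ξ (fun r => Pi.single (idx r) 1) s :=
  congrArg (· fun r => Pi.single (idx r) 1)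
    ((ContinuousLinearMap.proj (R := ℝ) (φ := fun _ : Fin p => ℝ) s).iteratedFDeriv_comp_left hh
      (mod_cast hk))

section MatrixBilin

variable {𝕜 : Type*} [NontriviallyNormedField 𝕜] [CompleteSpace 𝕜]
  {m n : Type*} [Fintype m] [Fintype n] [DecidableEq m] [DecidableEq n]

/-- The continuous bilinear form `(y, z) ↦ yᵀ Q z` of the matrix `Q`. -/
noncomputable def matrixBilin (Q : Matrix m n 𝕜) : (m → 𝕜) →L[𝕜] (n → 𝕜) →L[𝕜] 𝕜 :=
  LinearMap.toContinuousBilinearMap (𝕜 := 𝕜) (Matrix.toLinearMap₂' 𝕜 Q)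

theorem matrixBilin_apply (Q : Matrix m n 𝕜) (y : m → 𝕜) (z : n → 𝕜) :
    matrixBilin Q y z = y ⬝ᵥ Q *ᵥ z :=
  Matrix.toLinearMap₂'_apply' Q y z

theorem matrixBilin_apply_eq_sum (Q : Matrix m n 𝕜) (y : m → 𝕜) (z : n → 𝕜) :
    matrixBilin Q y z = ∑ s, ∑ r, y s * Q s r * z r := by
  simp only [matrixBilin_apply, dotProduct, mulVec, Finset.mul_sum, mul_assoc]

theorem matrixBilin_comm {Q : Matrix m m 𝕜} (hQ : Q.IsSymm) (y z : m → 𝕜) :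
    matrixBilin Q y z = matrixBilin Q z y := by
  rw [matrixBilin_apply, matrixBilin_apply, dotProduct_mulVec, ← mulVec_transpose, hQ.eq,
    dotProduct_comm]

end MatrixBilin

/-- For `j ≥ 1`, `h ∈ C^{j}(ℝⁿ;ℝ^p)`, symmetric `Q ∈ ℝ^{p×p}` and a
fixed vector `c ∈ ℝ^p`,
`D^j(x ↦ (c−h(x))ᵀ Q (c−h(x)))(ξ) = −2 · D^j h(ξ) *₁,₁ (Qc)
  + Σ_{i=0}^{j} Sym_{i,j−i}( D^i h(ξ) *₁,₁ ( Q *₂,₁ D^{j−i}h(ξ) ) )`,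
stated entrywise for every multi-index `idx`. -/
theorem deriv_output_tracking_term {n p : ℕ} (j : ℕ) (hj : 1 ≤ j)
    (h : (Fin n → ℝ) → Fin p → ℝ) (hh : ContDiff ℝ (j : ℕ∞) h)
    (Q : Matrix (Fin p) (Fin p) ℝ) (hQ : Q.IsSymm) (c : Fin p → ℝ)
    (ξ : Fin n → ℝ) (idx : Fin j → Fin n) :
    Dt n j (fun x => (c - h x) ⬝ᵥ Q.mulVec (c - h x)) ξ idx =
      (-2) * (∑ s : Fin p, Dt n j (fun x => h x s) ξ idx * Q.mulVec c s) +
        ∑ i : Fin (j + 1), ∑ σ ∈ shuffles j (i : ℕ), ∑ s : Fin p, ∑ r : Fin p,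
          Dt n (i : ℕ) (fun x => h x s) ξ
              (fun a => idx (σ (finL (i : ℕ) (by have := i.isLt; omega) a))) *
            Q s r *
            Dt n (j - (i : ℕ)) (fun x => h x r) ξ
              (fun a => idx (σ (finR (i : ℕ) (by have := i.isLt; omega) a))) := by
  have hξ : ContDiffAt ℝ j h ξ := hh.contDiffAt
  change _ = -2 * ((fun s => Dt n j (fun x => h x s) ξ idx) ⬝ᵥ Q *ᵥ c) + _
  simp only [Dt_component hξ le_rfl, Dt_component hξ (Fin.is_le _),
    Dt_component hξ (Nat.sub_le _ _), ← matrixBilin_apply_eq_sum, ← matrixBilin_apply]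
  exact deriv_output_tracking_term_general (Nat.one_le_iff_ne_zero.1 hj) hξ (matrixBilin Q)
    (matrixBilin_comm hQ) c fun r => Pi.single (idx r) 1
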